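/- Let D ≥ 0 be an integer and assume the induction hypothesis H(D): for every m ≥ 1 and all natural numbers p_1, …, p_m, q_1, …, q_m with Σ_k (p_k + q_k) ≤ D, the product Π_{k=1}^m tr(A^{p_k} B^{q_k}) agrees at every point of Ŝ_n with some element of Lie(ℱ). Then for all natural numbers p, q, m and all integers i_1, …, i_m ≥ 2 with p + q + Σ_k i_k ≤ D + 4, the product tr(A^p B^q) · Π_{k=1}^m tr(A^{i_k}) agrees at every point of Ŝ_n with some element of Lie(ℱ). -/

import Mathlib

open MvPolynomial Matrix

/-- Polynomial functions on `M_n(ℂ) × M_n(ℂ)`, represented as polynomials in the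
entries of the two matrices. -/
abbrev PolyFun (n : ℕ) := MvPolynomial ((Fin n × Fin n) ⊕ (Fin n × Fin n)) ℂ

/-- The matrix of coordinate functions `X_{jk}`. -/
noncomputable def Xmat (n : ℕ) : Matrix (Fin n) (Fin n) (PolyFun n) :=
  fun i j => MvPolynomial.X (Sum.inl (i, j))

/-- The matrix of coordinate functions `Y_{jk}`. -/
noncomputable def Ymat (n : ℕ) : Matrix (Fin n) (Fin n) (PolyFun n) :=
  fun i j => MvPolynomial.X (Sum.inr (i, j))

/-- Traceless part `A = X - (tr X / n) I_n`. -/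
noncomputable def Amat (n : ℕ) : Matrix (Fin n) (Fin n) (PolyFun n) :=
  Xmat n - (MvPolynomial.C ((n : ℂ)⁻¹) * Matrix.trace (Xmat n)) • (1 : Matrix (Fin n) (Fin n) (PolyFun n))

/-- Traceless part `B = Y - (tr Y / n) I_n`. -/
noncomputable def Bmat (n : ℕ) : Matrix (Fin n) (Fin n) (PolyFun n) :=
  Ymat n - (MvPolynomial.C ((n : ℂ)⁻¹) * Matrix.trace (Ymat n)) • (1 : Matrix (Fin n) (Fin n) (PolyFun n))

/-- The polynomial function `(X,Y) ↦ tr (A^p B^q)`. -/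
noncomputable def trAB (n p q : ℕ) : PolyFun n :=
  Matrix.trace (Amat n ^ p * Bmat n ^ q)

/-- The polynomial function `(X,Y) ↦ tr (X^a Y^b)`. -/
noncomputable def trXY (n a b : ℕ) : PolyFun n :=
  Matrix.trace (Xmat n ^ a * Ymat n ^ b)

/-- The Poisson bracket
`{F,G} = Σ_{j,k} ∂F/∂X_{jk} ∂G/∂Y_{kj} − ∂F/∂Y_{jk} ∂G/∂X_{kj}`. -/
noncomputable def pbracket {n : ℕ} (F G : PolyFun n) : PolyFun n :=
  ∑ j : Fin n, ∑ k : Fin n,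
    (MvPolynomial.pderiv (Sum.inl (j, k)) F * MvPolynomial.pderiv (Sum.inr (k, j)) G
      - MvPolynomial.pderiv (Sum.inr (j, k)) F * MvPolynomial.pderiv (Sum.inl (k, j)) G)

/-- Evaluation of a polynomial function at a pair of matrices. -/
noncomputable def evalP {n : ℕ} (X Y : Matrix (Fin n) (Fin n) ℂ) (F : PolyFun n) : ℂ :=
  MvPolynomial.eval (Sum.elim (fun p => X p.1 p.2) (fun p => Y p.1 p.2)) F

/-- The Calogero–Moser variety `Ĉ_n = {(X,Y) : rank([X,Y] − i I_n) = 1}`. -/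
def Chat (n : ℕ) : Set (Matrix (Fin n) (Fin n) ℂ × Matrix (Fin n) (Fin n) ℂ) :=
  {P | ((P.1 * P.2 - P.2 * P.1) - Complex.I • (1 : Matrix (Fin n) (Fin n) ℂ)).rank = 1}

/-- The traceless Calogero–Moser variety
`Ŝ_n = {(X,Y) : tr X = tr Y = 0, rank([X,Y] − i I_n) = 1}`. -/
def Shat (n : ℕ) : Set (Matrix (Fin n) (Fin n) ℂ × Matrix (Fin n) (Fin n) ℂ) :=
  {P | Matrix.trace P.1 = 0 ∧ Matrix.trace P.2 = 0 ∧
    ((P.1 * P.2 - P.2 * P.1) - Complex.I • (1 : Matrix (Fin n) (Fin n) ℂ)).rank = 1}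

/-- The set `ℱ = {tr A², tr B², tr A³, (tr AB)²}`. -/
noncomputable def calF (n : ℕ) : Set (PolyFun n) :=
  {trAB n 2 0, trAB n 0 2, trAB n 3 0, (trAB n 1 1) ^ 2}

/-- The smallest ℂ-linear subspace of the polynomial functions containing `S`
and closed under the Poisson bracket. -/
inductive LieGen (n : ℕ) (S : Set (PolyFun n)) : PolyFun n → Prop
  | base {f : PolyFun n} : f ∈ S → LieGen n S f
  | zero : LieGen n S 0
  | add {f g : PolyFun n} : LieGen n S f → LieGen n S g → LieGen n S (f + g)
  | smul (c : ℂ) {f : PolyFun n} : LieGen n S f → LieGen n S (c • f)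
  | bracket {f g : PolyFun n} : LieGen n S f → LieGen n S g → LieGen n S (pbracket f g)

/-!
On `Ŝ_n` the matrix `M = [A, B] - i` has rank one, so that `tr (U M) * tr (V M) = tr (U M V M)`.
Exchanging two adjacent letters in a word in `A` and `B` changes its trace by the trace of a shorter
word `W` times `[A, B]`. By the rank one identity and cyclicity of the trace, `tr (W [A, B])` is a
polynomial in the `tr A ^ p B ^ q` of degree two less than that of `W`, so that reordering a word
changes its trace only in degree lower by four.

The Hamiltonian flows of `tr B ^ 2` and `tr A ^ (k + 1)` for `k ≥ 1` preserve `Lie(ℱ)` and `Ŝ_n`, so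
their vector fields preserve the functions that agree on `Ŝ_n` with an element of `Lie(ℱ)`. Modulo
reordering words, the first replaces an `A` by a `B`, and the second replaces a `B` by the traceless
part of `A ^ k`. All `tr A ^ k` with `k ≥ 2` lie in `Lie(ℱ)`, and the first flow leads from
`tr A ^ (p + q)` to all the `tr A ^ p B ^ q`. A factor `tr A ^ k` is then split off `tr B ^ (q + 1)`
by the second flow, and the case `k = 1` turns the remaining `B` into `A` one at a time. The
reordering errors have degree at most `D` and are absorbed by `H(D)`.
-/

open Finset.HasAntidiagonal (antidiagonal mem_antidiagonal)

theorem nsmul_mem_submodule_iff {𝕜 V : Type*} [DivisionRing 𝕜] [CharZero 𝕜] [AddCommGroup V]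
    [Module 𝕜 V] {S : Submodule 𝕜 V} {k : ℕ} (hk : k ≠ 0) {f : V} : k • f ∈ S ↔ f ∈ S := by
  rw [← Nat.cast_smul_eq_nsmul 𝕜, S.smul_mem_iff (Nat.cast_ne_zero.2 hk)]

section Leibniz

theorem map_pow_succ_of_leibniz {R : Type*} [Semiring R] (D : R →+ R)
    (hD : ∀ x y, D (x * y) = D x * y + x * D y) (x : R) (q : ℕ) :
    D (x ^ (q + 1)) = ∑ ij ∈ antidiagonal q, x ^ ij.1 * D x * x ^ ij.2 := by
  induction q with
  | zero => simp
  | succ q ih =>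
    rw [pow_succ, hD, ih, Finset.Nat.sum_antidiagonal_succ', Finset.sum_mul, pow_zero, mul_one,
      add_comm]
    simp only [pow_succ, mul_assoc]

theorem lie_pow_succ {R : Type*} [Ring R] (x y : R) (q : ℕ) :
    ⁅x, y ^ (q + 1)⁆ = ∑ ij ∈ antidiagonal q, y ^ ij.1 * ⁅x, y⁆ * y ^ ij.2 :=
  map_pow_succ_of_leibniz (AddMonoidHom.mulLeft x - AddMonoidHom.mulRight x)
    (fun a b => by simp [sub_mul, mul_sub, mul_assoc]) y q

end Leibniz

section Permutations

theorem sub_append_mem_of_perm {α G : Type*} [LinearOrder α] [AddCommGroup G] {S : AddSubgroup G}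
    {F : List α → G} {d : ℕ}
    (hF : ∀ u v a b, b < a → u.length + v.length + 2 = d →
      F (u ++ a :: b :: v) - F (u ++ b :: a :: v) ∈ S)
    {w w' : List α} (h : w.Perm w') :
    ∀ u : List α, u.length + w.length = d → F (u ++ w) - F (u ++ w') ∈ S := by
  induction h with
  | nil => simp
  | cons a _ ih =>
    intro u hu
    simpa using ih (u ++ [a])
      (by simp only [List.length_append, List.length_cons, List.length_nil] at hu ⊢; omega)
  | swap a b v =>
    intro u hu
    have hlen : u.length + v.length + 2 = d := hu
    rcases lt_trichotomy a b with hab | rfl | hab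
    · exact hF u v b a hab hlen
    · simp
    · simpa using neg_mem (hF u v a b hab hlen)
  | trans h₁ _ ih₁ ih₂ =>
    intro u hu
    simpa using add_mem (ih₁ u hu) (ih₂ u (by rwa [← h₁.length_eq]))

theorem sub_mem_of_perm {α G : Type*} [LinearOrder α] [AddCommGroup G] {S : AddSubgroup G}
    {F : List α → G} {w w' : List α} (h : w.Perm w')
    (hF : ∀ u v a b, b < a → u.length + v.length + 2 = w.length →
      F (u ++ a :: b :: v) - F (u ++ b :: a :: v) ∈ S) :
    F w - F w' ∈ S :=
  sub_append_mem_of_perm hF h [] (by simp)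

end Permutations

section TraceSpan

variable {𝕜 K ι : Type*} [Field 𝕜] [CommRing K] [Algebra 𝕜 K] [Fintype ι] [DecidableEq ι]

/-- The word `w` in two matrices, with letters `A` (for `true`) and `B` (for `false`). -/
def matrixWord (A B : Matrix ι ι K) (w : List Bool) : Matrix ι ι K :=
  (w.map fun b => bif b then A else B).prod

/-- The word `A ^ p * B ^ q`. -/
def sortedWord (p q : ℕ) : List Bool :=
  List.replicate p true ++ List.replicate q false

variable (𝕜) in
/-- The span of the products of traces `tr (A ^ p * B ^ q)` of total degree at most `e` in `A` and
`B`. The degree is an integer so that the span is trivial for `e < 0`. -/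
def traceSpan (A B : Matrix ι ι K) (e : ℤ) : Submodule 𝕜 K :=
  Submodule.span 𝕜 {f | ∃ l : List (ℕ × ℕ), ((l.map fun x => x.1 + x.2).sum : ℕ) ≤ e ∧
    f = (l.map fun x => trace (A ^ x.1 * B ^ x.2)).prod}

/-- The trace identity satisfied by matrices of rank one over a field, in a form that makes sense
for matrices of functions. -/
def HasRankOneTraces (M : Matrix ι ι K) : Prop :=
  ∀ U V : Matrix ι ι K, trace (U * M) * trace (V * M) = trace (U * M * V * M)

variable (𝕜) in
/-- The induction statement for words of length `d`: their traces are polynomials in the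
`tr (A ^ p * B ^ q)` of degree `d`, and their traces against the commutator of the two letters are
polynomials of degree `d - 2`, although the commutator adds two letters. -/
def WordTracesReduce (A B : Matrix ι ι K) (d : ℕ) : Prop :=
  ∀ w : List Bool, w.length = d → trace (matrixWord A B w) ∈ traceSpan 𝕜 A B d ∧
    trace (matrixWord A B w * ⁅A, B⁆) ∈ traceSpan 𝕜 A B (d - 2)

variable {A B : Matrix ι ι K}

theorem matrixWord_append (w w' : List Bool) :
    matrixWord A B (w ++ w') = matrixWord A B w * matrixWord A B w' := by
  simp [matrixWord]

theorem matrixWord_cons (b : Bool) (w : List Bool) :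
    matrixWord A B (b :: w) = (bif b then A else B) * matrixWord A B w := by
  simp [matrixWord]

theorem matrixWord_replicate (b : Bool) (p : ℕ) :
    matrixWord A B (List.replicate p b) = (bif b then A else B) ^ p := by
  simp [matrixWord]

theorem matrixWord_sortedWord (p q : ℕ) : matrixWord A B (sortedWord p q) = A ^ p * B ^ q := by
  simp [sortedWord, matrixWord_append, matrixWord_replicate]

theorem length_sortedWord (p q : ℕ) : (sortedWord p q).length = p + q := by
  simp [sortedWord]

theorem perm_sortedWord_iff {w : List Bool} {p q : ℕ} :
    w.Perm (sortedWord p q) ↔ w.count true = p ∧ w.count false = q := by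
  simp [List.perm_iff_count, sortedWord, List.count_replicate, and_comm]

theorem matrixWord_swap_sub (u v : List Bool) :
    matrixWord A B (u ++ true :: false :: v) - matrixWord A B (u ++ false :: true :: v) =
      matrixWord A B u * ⁅A, B⁆ * matrixWord A B v := by
  simp only [matrixWord_append, matrixWord_cons, cond_true, cond_false, Ring.lie_def]
  noncomm_ring

theorem map_trace_matrixWord {L : Type*} [CommRing L] (φ : K →+* L) (w : List Bool) :
    φ (trace (matrixWord A B w)) = trace (matrixWord (A.map φ) (B.map φ) w) := by
  have hword : φ.mapMatrix (matrixWord A B w) = matrixWord (A.map φ) (B.map φ) w := by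
    rw [matrixWord, map_list_prod, List.map_map]
    congr 2
    funext b
    cases b <;> rfl
  rw [← hword]
  exact AddMonoidHom.map_trace φ _

theorem traceSpan_mono {e e' : ℤ} (h : e ≤ e') : traceSpan 𝕜 A B e ≤ traceSpan 𝕜 A B e' :=
  Submodule.span_mono fun _ ⟨l, hl, hf⟩ => ⟨l, hl.trans h, hf⟩

theorem one_mem_traceSpan : (1 : K) ∈ traceSpan 𝕜 A B 0 :=
  Submodule.subset_span ⟨[], by simp, by simp⟩

theorem trace_pow_mul_pow_mem_traceSpan (p q : ℕ) :
    trace (A ^ p * B ^ q) ∈ traceSpan 𝕜 A B (p + q) :=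
  Submodule.subset_span ⟨[(p, q)], by simp, by simp⟩

theorem mul_mem_traceSpan {e e' : ℤ} {f g : K} (hf : f ∈ traceSpan 𝕜 A B e)
    (hg : g ∈ traceSpan 𝕜 A B e') : f * g ∈ traceSpan 𝕜 A B (e + e') := by
  have hfg := Submodule.mul_mem_mul hf hg
  rw [traceSpan, traceSpan, Submodule.span_mul_span] at hfg
  refine Submodule.span_mono ?_ hfg
  rintro _ ⟨_, ⟨l, hl, rfl⟩, _, ⟨l', hl', rfl⟩, rfl⟩
  refine ⟨l ++ l', ?_, by simp⟩
  simpa using add_le_add hl hl'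

theorem trace_matrixWord_sub_mem_of_reduce {w w' : List Bool} (h : w.Perm w')
    (hred : ∀ d, d + 2 = w.length → WordTracesReduce 𝕜 A B d) :
    trace (matrixWord A B w) - trace (matrixWord A B w') ∈ traceSpan 𝕜 A B (w.length - 4) := by
  refine sub_mem_of_perm (S := (traceSpan 𝕜 A B _).toAddSubgroup)
    (F := fun w => trace (matrixWord A B w)) h fun u v a b hab hlen => ?_
  obtain ⟨rfl, rfl⟩ := Bool.lt_iff.1 hab
  have hvu := (hred (v ++ u).length (by rw [List.length_append]; omega) (v ++ u) rfl).2
  rw [matrixWord_append] at hvu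
  rw [← trace_sub, matrixWord_swap_sub, trace_mul_cycle]
  exact traceSpan_mono (by rw [List.length_append]; omega) hvu

/-- Writing `⁅A, B⁆ = M + c` and expanding, only `tr (U M V M) = tr (U M) * tr (V M)` is not
already a shorter trace. -/
theorem trace_mul_lie_mul_mul_lie_mem {c : 𝕜}
    (hM : HasRankOneTraces (⁅A, B⁆ - c • (1 : Matrix ι ι K))) {d : ℕ}
    (hred : ∀ e < d, WordTracesReduce 𝕜 A B e) {u v : List Bool}
    (hlen : u.length + v.length + 2 = d) :
    trace (matrixWord A B u * ⁅A, B⁆ * matrixWord A B v * ⁅A, B⁆) ∈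
      traceSpan 𝕜 A B (d - 2) := by
  set M := ⁅A, B⁆ - c • (1 : Matrix ι ι K) with hMdef
  have hC : ⁅A, B⁆ = M + c • (1 : Matrix ι ι K) := (sub_add_cancel _ _).symm
  have hword (w : List Bool) (hw : w.length < d) :
      trace (matrixWord A B w * M) ∈ traceSpan 𝕜 A B w.length := by
    obtain ⟨htr, hlie⟩ := hred _ hw w rfl
    rw [hMdef, mul_sub, mul_smul_comm, mul_one, trace_sub, trace_smul]
    exact sub_mem (traceSpan_mono (by omega) hlie) (Submodule.smul_mem _ _ htr)
  have huv := hword (u ++ v) (by rw [List.length_append]; omega)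
  have hvu := hword (v ++ u) (by rw [List.length_append]; omega)
  have hvu' := (hred _ (by rw [List.length_append]; omega) (v ++ u) rfl).1
  rw [matrixWord_append] at huv hvu hvu'
  have hprod := mul_mem_traceSpan (hword u (by omega)) (hword v (by omega))
  rw [hM] at hprod
  have hexpand : trace (matrixWord A B u * ⁅A, B⁆ * matrixWord A B v * ⁅A, B⁆) =
      trace (matrixWord A B u * M * matrixWord A B v * M) +
      c • trace (matrixWord A B u * matrixWord A B v * M) +
      c • trace (matrixWord A B v * matrixWord A B u * M) +
      c • c • trace (matrixWord A B v * matrixWord A B u) := by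
    rw [hC, ← trace_mul_cycle (matrixWord A B u) M, trace_mul_comm (matrixWord A B v)]
    simp only [mul_add, add_mul, mul_smul_comm, smul_mul_assoc, mul_one, trace_add, trace_smul,
      smul_add]
    abel
  rw [hexpand]
  refine add_mem (add_mem (add_mem ?_ ?_) ?_) ?_
  · exact traceSpan_mono (by omega) hprod
  · exact Submodule.smul_mem _ _ (traceSpan_mono (by rw [List.length_append]; omega) huv)
  · exact Submodule.smul_mem _ _ (traceSpan_mono (by rw [List.length_append]; omega) hvu)
  · exact Submodule.smul_mem _ _ (Submodule.smul_mem _ _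
      (traceSpan_mono (by rw [List.length_append]; omega) hvu'))

theorem trace_matrixWord_mul_lie_sub_mem {c : 𝕜}
    (hM : HasRankOneTraces (⁅A, B⁆ - c • (1 : Matrix ι ι K))) {w w' : List Bool} (h : w.Perm w')
    (hred : ∀ e < w.length, WordTracesReduce 𝕜 A B e) :
    trace (matrixWord A B w * ⁅A, B⁆) - trace (matrixWord A B w' * ⁅A, B⁆) ∈
      traceSpan 𝕜 A B (w.length - 2) := by
  refine sub_mem_of_perm (S := (traceSpan 𝕜 A B _).toAddSubgroup)
    (F := fun w => trace (matrixWord A B w * ⁅A, B⁆)) h fun u v a b hab hlen => ?_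
  obtain ⟨rfl, rfl⟩ := Bool.lt_iff.1 hab
  rw [← trace_sub, ← sub_mul, matrixWord_swap_sub]
  exact trace_mul_lie_mul_mul_lie_mem hM hred hlen

/-- Cyclicity gives `tr (A ^ p * ⁅A, B ^ (q + 1)⁆) = 0`, and the Leibniz rule writes the left side
as a sum of `q + 1` traces that all reduce to `tr (A ^ p * B ^ q * ⁅A, B⁆)`. -/
theorem trace_sorted_mul_lie_mem [CharZero 𝕜] {c : 𝕜}
    (hM : HasRankOneTraces (⁅A, B⁆ - c • (1 : Matrix ι ι K))) {p q : ℕ}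
    (hred : ∀ e < p + q, WordTracesReduce 𝕜 A B e) :
    trace (A ^ p * B ^ q * ⁅A, B⁆) ∈ traceSpan 𝕜 A B (p + q - 2) := by
  have hterm : ∀ ij ∈ antidiagonal q,
      trace (A ^ p * B ^ q * ⁅A, B⁆) - trace (A ^ p * (B ^ ij.1 * ⁅A, B⁆ * B ^ ij.2)) ∈
        traceSpan 𝕜 A B (p + q - 2) := by
    rintro ⟨i, j⟩ hij
    rw [mem_antidiagonal] at hij
    have hperm : (sortedWord p q).Perm (List.replicate j false ++ sortedWord p i) :=
      (perm_sortedWord_iff.2 (by simp [sortedWord, List.count_replicate]; omega)).symm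
    have h := trace_matrixWord_mul_lie_sub_mem hM hperm
      (by rwa [length_sortedWord])
    rw [matrixWord_append, matrixWord_replicate, matrixWord_sortedWord, matrixWord_sortedWord,
      length_sortedWord, Nat.cast_add] at h
    convert h using 2
    rw [cond_false, mul_assoc (B ^ j), trace_mul_comm (B ^ j)]
    simp only [mul_assoc]
  have hsum : ∑ ij ∈ antidiagonal q, trace (A ^ p * (B ^ ij.1 * ⁅A, B⁆ * B ^ ij.2)) = 0 := by
    rw [← trace_sum, ← Finset.mul_sum, ← lie_pow_succ, Ring.lie_def, mul_sub, trace_sub,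
      ← mul_assoc, ← mul_assoc, trace_mul_cycle (A ^ p) (B ^ (q + 1)) A, ← pow_succ, ← pow_succ',
      sub_self]
  have h := Submodule.sum_mem _ hterm
  rw [Finset.sum_sub_distrib, hsum, sub_zero, Finset.sum_const, Finset.Nat.card_antidiagonal] at h
  exact (nsmul_mem_submodule_iff q.succ_ne_zero).1 h

theorem wordTracesReduce [CharZero 𝕜] {c : 𝕜}
    (hM : HasRankOneTraces (⁅A, B⁆ - c • (1 : Matrix ι ι K))) (d : ℕ) :
    WordTracesReduce 𝕜 A B d := by
  induction d using Nat.strong_induction_on with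
  | _ d hred =>
  rintro w rfl
  have hlen : w.count true + w.count false = w.length := List.count_true_add_count_false w
  have hlen' : (w.count true + w.count false : ℤ) = w.length := by exact_mod_cast hlen
  have hperm : w.Perm (sortedWord (w.count true) (w.count false)) :=
    perm_sortedWord_iff.2 ⟨rfl, rfl⟩
  have htr := trace_matrixWord_sub_mem_of_reduce hperm fun e he => hred e (by omega)
  have hlie := trace_matrixWord_mul_lie_sub_mem hM hperm hred
  rw [matrixWord_sortedWord] at htr hlie
  have htr' := trace_pow_mul_pow_mem_traceSpan (𝕜 := 𝕜) (A := A) (B := B)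
    (w.count true) (w.count false)
  have hlie' := trace_sorted_mul_lie_mem hM (p := w.count true) (q := w.count false)
    (by rwa [hlen])
  rw [hlen'] at htr' hlie'
  exact ⟨(Submodule.sub_mem_iff_left _ htr').1 (traceSpan_mono (by omega) htr),
    (Submodule.sub_mem_iff_left _ hlie').1 hlie⟩

theorem trace_matrixWord_sub_mem [CharZero 𝕜] {c : 𝕜}
    (hM : HasRankOneTraces (⁅A, B⁆ - c • (1 : Matrix ι ι K))) {w w' : List Bool}
    (h : w.Perm w') :
    trace (matrixWord A B w) - trace (matrixWord A B w') ∈ traceSpan 𝕜 A B (w.length - 4) :=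
  trace_matrixWord_sub_mem_of_reduce h fun d _ => wordTracesReduce hM d

end TraceSpan

section TracelessPart

variable {𝕜 K L ι : Type*} [Field 𝕜] [CommRing K] [Algebra 𝕜 K] [CommRing L] [Algebra 𝕜 L]
  [Fintype ι] [DecidableEq ι]

variable (𝕜) in
/-- The projection `P - (tr P / n)` of an `n × n` matrix onto the matrices of trace zero. -/
def tracelessPart (P : Matrix ι ι K) : Matrix ι ι K :=
  P - ((Fintype.card ι : 𝕜)⁻¹ • trace P) • (1 : Matrix ι ι K)

theorem trace_tracelessPart [CharZero 𝕜] (P : Matrix ι ι K) : trace (tracelessPart 𝕜 P) = 0 := by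
  cases isEmpty_or_nonempty ι
  · exact trace_eq_zero_of_isEmpty _
  · have hcard : (Fintype.card ι : 𝕜) ≠ 0 := Nat.cast_ne_zero.2 Fintype.card_ne_zero
    rw [tracelessPart, trace_sub, trace_smul, trace_one, smul_assoc, smul_eq_mul, mul_comm,
      ← nsmul_eq_mul, ← Nat.cast_smul_eq_nsmul 𝕜, inv_smul_smul₀ hcard, sub_self]

theorem tracelessPart_of_trace_eq_zero {P : Matrix ι ι K} (h : trace P = 0) :
    tracelessPart 𝕜 P = P := by
  simp [tracelessPart, h]

theorem tracelessPart_zero : tracelessPart 𝕜 (0 : Matrix ι ι K) = 0 :=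
  tracelessPart_of_trace_eq_zero (trace_zero _ _)

theorem mul_tracelessPart (P Q : Matrix ι ι K) :
    P * tracelessPart 𝕜 Q = P * Q - ((Fintype.card ι : 𝕜)⁻¹ • trace Q) • P := by
  rw [tracelessPart, mul_sub, mul_smul_comm, mul_one]

theorem trace_mul_tracelessPart (P Q : Matrix ι ι K) :
    trace (P * tracelessPart 𝕜 Q) =
      trace (P * Q) - (Fintype.card ι : 𝕜)⁻¹ • (trace Q * trace P) := by
  rw [mul_tracelessPart, trace_sub, trace_smul, smul_eq_mul, smul_mul_assoc]

theorem trace_mul_tracelessPart_comm (P Q : Matrix ι ι K) :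
    trace (P * tracelessPart 𝕜 Q) = trace (tracelessPart 𝕜 P * Q) := by
  rw [trace_mul_comm (tracelessPart 𝕜 P), trace_mul_tracelessPart, trace_mul_tracelessPart,
    trace_mul_comm P, mul_comm (trace P)]

theorem commute_tracelessPart_pow (P : Matrix ι ι K) (k : ℕ) :
    Commute P (tracelessPart 𝕜 (P ^ k)) :=
  ((Commute.refl P).pow_right k).sub_right ((Commute.one_right P).smul_right _)

theorem tracelessPart_map (φ : K →ₗ[𝕜] L) (P : Matrix ι ι K) :
    (tracelessPart 𝕜 P).map φ = tracelessPart 𝕜 (P.map φ) := by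
  have htr : φ (trace P) = trace (P.map φ) := AddMonoidHom.map_trace φ P
  ext i j
  by_cases hij : i = j <;> simp [tracelessPart, hij, htr]

end TracelessPart

section Derivation

variable {R K ι : Type*} [CommRing R] [CommRing K] [Algebra R K] [Fintype ι]
  (d : Derivation R K K)

theorem mul_map_derivation (P Q : Matrix ι ι K) :
    (P * Q).map d = P.map d * Q + P * Q.map d := by
  ext i j
  simp only [map_apply, mul_apply, Matrix.add_apply, map_sum, Derivation.leibniz, smul_eq_mul,
    Finset.sum_add_distrib]
  rw [add_comm]
  simp only [mul_comm]

theorem derivation_trace (P : Matrix ι ι K) : d (trace P) = trace (P.map d) :=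
  AddMonoidHom.map_trace d P

variable [DecidableEq ι]

theorem pow_succ_map_derivation (P : Matrix ι ι K) (q : ℕ) :
    (P ^ (q + 1)).map d = ∑ ij ∈ antidiagonal q, P ^ ij.1 * P.map d * P ^ ij.2 :=
  map_pow_succ_of_leibniz (d : K →+ K).mapMatrix (mul_map_derivation d) P q

theorem pow_map_derivation_eq_zero {P : Matrix ι ι K} (h : P.map d = 0) (p : ℕ) :
    (P ^ p).map d = 0 := by
  induction p with
  | zero => ext i j; by_cases hij : i = j <;> simp [hij]
  | succ p ih => rw [pow_succ, mul_map_derivation, ih, h, zero_mul, mul_zero, add_zero]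

theorem tracelessPart_map_derivation {𝕜 : Type*} [Field 𝕜] [Algebra 𝕜 K] (d : Derivation 𝕜 K K)
    (P : Matrix ι ι K) : (tracelessPart 𝕜 P).map d = tracelessPart 𝕜 (P.map d) :=
  tracelessPart_map d.toLinearMap P

theorem derivation_trace_pow_eq_zero {P : Matrix ι ι K} (h : P.map d = 0) (p : ℕ) :
    d (trace (P ^ p)) = 0 := by
  rw [derivation_trace, pow_map_derivation_eq_zero d h, trace_zero]

theorem derivation_trace_pow_succ (P : Matrix ι ι K) (k : ℕ) :
    d (trace (P ^ (k + 1))) = (k + 1) • trace (P ^ k * P.map d) := by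
  rw [derivation_trace, pow_succ_map_derivation, trace_sum, ← Finset.Nat.card_antidiagonal k]
  refine Finset.sum_eq_card_nsmul fun ij hij => ?_
  rw [trace_mul_cycle, ← pow_add, add_comm, mem_antidiagonal.1 hij]

theorem derivation_trace_tracelessPart_pow_succ {𝕜 : Type*} [Field 𝕜] [Algebra 𝕜 K]
    (d : Derivation 𝕜 K K) {P : Matrix ι ι K} {i j : ι} (hP : P.map d = single i j 1) (k : ℕ) :
    d (trace (tracelessPart 𝕜 P ^ (k + 1))) =
      (k + 1) • tracelessPart 𝕜 (tracelessPart 𝕜 P ^ k) j i := by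
  rw [derivation_trace_pow_succ, tracelessPart_map_derivation, hP, trace_mul_tracelessPart_comm,
    trace_mul_single, MulOpposite.op_one, one_smul]

theorem derivation_trace_mul_pow_succ {P Q : Matrix ι ι K} (hP : P.map d = 0) (p q : ℕ) :
    d (trace (P ^ p * Q ^ (q + 1))) =
      ∑ ij ∈ antidiagonal q, trace (P ^ p * (Q ^ ij.1 * Q.map d * Q ^ ij.2)) := by
  rw [derivation_trace, mul_map_derivation, pow_map_derivation_eq_zero d hP, zero_mul, zero_add,
    pow_succ_map_derivation, Finset.mul_sum, trace_sum]

theorem derivation_trace_pow_succ_mul {P Q : Matrix ι ι K} (hQ : Q.map d = 0) (p q : ℕ) :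
    d (trace (P ^ (p + 1) * Q ^ q)) =
      ∑ ij ∈ antidiagonal p, trace (P ^ ij.1 * P.map d * P ^ ij.2 * Q ^ q) := by
  rw [derivation_trace, mul_map_derivation, pow_map_derivation_eq_zero d hQ, mul_zero, add_zero,
    pow_succ_map_derivation, Finset.sum_mul, trace_sum]

end Derivation

section VectorField

theorem mkDerivation_eq_sum_pderiv {R σ : Type*} [CommSemiring R] [Fintype σ]
    (v : σ → MvPolynomial σ R) (f : MvPolynomial σ R) :
    mkDerivation R v f = ∑ s, pderiv s f * v s := by
  classical
  induction f using MvPolynomial.induction_on with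
  | C a => simp
  | add f g hf hg => simp only [map_add, hf, hg, add_mul, Finset.sum_add_distrib]
  | mul_X f s hf =>
    simp [hf, add_mul, Finset.sum_add_distrib, Finset.mul_sum, pderiv_X, Pi.single_apply,
      mul_assoc]

/-- The restriction of a polynomial function to the line `t ↦ x + t u`, as a polynomial in `t`. -/
noncomputable def restrictLine {R σ : Type*} [CommSemiring R] (x u : σ → R) :
    MvPolynomial σ R →ₐ[R] Polynomial R :=
  aeval fun s => Polynomial.C (x s) + Polynomial.X * Polynomial.C (u s)

theorem restrictLine_X {R σ : Type*} [CommSemiring R] (x u : σ → R) (s : σ) :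
    restrictLine x u (X s) = Polynomial.C (x s) + Polynomial.X * Polynomial.C (u s) :=
  aeval_X _ _

theorem eval_restrictLine {R σ : Type*} [CommSemiring R] (x u : σ → R) (f : MvPolynomial σ R)
    (t : R) : (restrictLine x u f).eval t = eval (x + t • u) f := by
  induction f using MvPolynomial.induction_on with
  | C a => simp [restrictLine]
  | add f g hf hg => simp only [map_add, Polynomial.eval_add, hf, hg]
  | mul_X f s hf => simp only [map_mul, restrictLine_X, Polynomial.eval_mul, hf, eval_X,
      Polynomial.eval_add, Polynomial.eval_C, Polynomial.eval_X, Pi.add_apply, Pi.smul_apply,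
      smul_eq_mul]

theorem eval_derivative_restrictLine {R σ : Type*} [CommSemiring R] (x : σ → R)
    (v : σ → MvPolynomial σ R) (f : MvPolynomial σ R) :
    (Polynomial.derivative (restrictLine x (fun s => eval x (v s)) f)).eval 0 =
      eval x (mkDerivation R v f) := by
  induction f using MvPolynomial.induction_on with
  | C a => simp [restrictLine]
  | add f g hf hg => simp only [map_add, Polynomial.eval_add, hf, hg]
  | mul_X f s hf =>
    rw [map_mul, Polynomial.derivative_mul, Polynomial.eval_add, Polynomial.eval_mul,
      Polynomial.eval_mul, hf, restrictLine_X, eval_restrictLine, zero_smul, add_zero]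
    simp only [mkDerivation_X, Derivation.leibniz, map_add, map_mul, smul_eq_mul, eval_X,
      Polynomial.derivative_mul, Polynomial.derivative_C,
      Polynomial.derivative_X, Polynomial.eval_add, Polynomial.eval_mul, Polynomial.eval_C,
      Polynomial.eval_X, Polynomial.eval_one, Polynomial.eval_zero]
    ring

theorem eval_mkDerivation_eq_zero {𝕜 σ : Type*} [Field 𝕜] [Infinite 𝕜] {S : Set (σ → 𝕜)}
    {v : σ → MvPolynomial σ 𝕜} (hv : ∀ x ∈ S, ∀ t : 𝕜, (x + t • fun s => eval x (v s)) ∈ S)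
    {f : MvPolynomial σ 𝕜} (hf : ∀ x ∈ S, eval x f = 0) {x : σ → 𝕜} (hx : x ∈ S) :
    eval x (mkDerivation 𝕜 v f) = 0 := by
  have hline : restrictLine x (fun s => eval x (v s)) f = 0 :=
    Polynomial.funext fun t => by rw [eval_restrictLine, Polynomial.eval_zero, hf _ (hv x hx t)]
  rw [← eval_derivative_restrictLine, hline, Polynomial.derivative_zero, Polynomial.eval_zero]

end VectorField

section RankOne

variable {ι 𝕜 : Type*} [Fintype ι] [Field 𝕜]

theorem exists_eq_vecMulVec_of_rank_eq_one {M : Matrix ι ι 𝕜} (h : M.rank = 1) :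
    ∃ v w : ι → 𝕜, M = vecMulVec v w := by
  classical
  obtain ⟨⟨v, _⟩, _, hv⟩ := finrank_eq_one_iff'.1 (show Module.finrank 𝕜 _ = 1 from h)
  choose w hw using fun j => hv ⟨M.mulVecLin (Pi.single j 1), LinearMap.mem_range_self _ _⟩
  refine ⟨v, w, ?_⟩
  ext i j
  have hij := congrFun (congrArg Subtype.val (hw j)) i
  simp only [mulVecLin_apply, mulVec_single_one, col_apply, SetLike.val_smul, Pi.smul_apply,
    smul_eq_mul] at hij
  rw [vecMulVec_apply, mul_comm, hij]

theorem hasRankOneTraces_of_rank_eq_one {M : Matrix ι ι 𝕜} (h : M.rank = 1) :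
    HasRankOneTraces M := by
  obtain ⟨v, w, rfl⟩ := exists_eq_vecMulVec_of_rank_eq_one h
  intro U V
  rw [mul_assoc (U * _), mul_vecMulVec, mul_vecMulVec, vecMulVec_mul_vecMulVec, trace_vecMulVec,
    trace_vecMulVec, trace_vecMulVec, dotProduct_smul, smul_eq_mul, dotProduct_comm w, mul_comm]

theorem hasRankOneTraces_of_forall_eval {T : Type*} {M : Matrix ι ι (T → 𝕜)}
    (h : ∀ t, HasRankOneTraces (M.map (Pi.evalRingHom (fun _ => 𝕜) t))) : HasRankOneTraces M := by
  classical
  intro U V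
  funext t
  have htrace (Z : Matrix ι ι (T → 𝕜)) :
      trace Z t = trace ((Pi.evalRingHom (fun _ => 𝕜) t).mapMatrix Z) :=
    AddMonoidHom.map_trace (Pi.evalRingHom (fun _ => 𝕜) t) Z
  simp only [Pi.mul_apply, htrace, map_mul]
  exact h t _ _

end RankOne

section Flows

variable {n : ℕ}

theorem Amat_eq_tracelessPart : Amat n = tracelessPart ℂ (Xmat n) := by
  rw [Amat, tracelessPart, C_mul', Fintype.card_fin]

theorem Bmat_eq_tracelessPart : Bmat n = tracelessPart ℂ (Ymat n) := by
  rw [Bmat, tracelessPart, C_mul', Fintype.card_fin]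

theorem trace_Amat : trace (Amat n) = 0 := by
  rw [Amat_eq_tracelessPart, trace_tracelessPart]

theorem trace_Bmat : trace (Bmat n) = 0 := by
  rw [Bmat_eq_tracelessPart, trace_tracelessPart]

theorem trAB_zero_right (p : ℕ) : trAB n p 0 = trace (Amat n ^ p) := by
  rw [trAB, pow_zero, mul_one]

theorem trAB_zero_left (q : ℕ) : trAB n 0 q = trace (Bmat n ^ q) := by
  rw [trAB, pow_zero, one_mul]

theorem trAB_zero_zero : trAB n 0 0 = n := by
  simp [trAB]

theorem trAB_one_zero : trAB n 1 0 = 0 := by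
  rw [trAB_zero_right, pow_one, trace_Amat]

/-- The derivation of polynomial functions given by the vector field `(U, V)`: the directional
derivative in the direction `U` in the variable `X` and `V` in the variable `Y`. -/
noncomputable def matrixDeriv (U V : Matrix (Fin n) (Fin n) (PolyFun n)) :
    Derivation ℂ (PolyFun n) (PolyFun n) :=
  mkDerivation ℂ (Sum.elim (fun p => U p.1 p.2) (fun p => V p.1 p.2))

theorem matrixDeriv_apply (U V : Matrix (Fin n) (Fin n) (PolyFun n)) (F : PolyFun n) :
    matrixDeriv U V F = ∑ j, ∑ k,
      (pderiv (Sum.inl (j, k)) F * U j k + pderiv (Sum.inr (j, k)) F * V j k) := by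
  rw [matrixDeriv, mkDerivation_eq_sum_pderiv, Fintype.sum_sum_type, Fintype.sum_prod_type,
    Fintype.sum_prod_type]
  simp only [Sum.elim_inl, Sum.elim_inr, Finset.sum_add_distrib]

theorem Amat_map_matrixDeriv (U V : Matrix (Fin n) (Fin n) (PolyFun n)) :
    (Amat n).map (matrixDeriv U V) = tracelessPart ℂ U := by
  have hX : (Xmat n).map (matrixDeriv U V) = U := by
    ext i j : 2
    simp [Xmat, matrixDeriv]
  rw [Amat_eq_tracelessPart, tracelessPart_map_derivation, hX]

theorem Bmat_map_matrixDeriv (U V : Matrix (Fin n) (Fin n) (PolyFun n)) :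
    (Bmat n).map (matrixDeriv U V) = tracelessPart ℂ V := by
  have hY : (Ymat n).map (matrixDeriv U V) = V := by
    ext i j : 2
    simp [Ymat, matrixDeriv]
  rw [Bmat_eq_tracelessPart, tracelessPart_map_derivation, hY]

theorem Xmat_map_pderiv_inl (i j : Fin n) :
    (Xmat n).map (pderiv (Sum.inl (i, j))) = single i j 1 := by
  ext a b : 2
  simp [Xmat, single_apply, pderiv_X, Pi.single_apply, eq_comm]

theorem Ymat_map_pderiv_inr (i j : Fin n) :
    (Ymat n).map (pderiv (Sum.inr (i, j))) = single i j 1 := by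
  ext a b : 2
  simp [Ymat, single_apply, pderiv_X, Pi.single_apply, eq_comm]

theorem Amat_map_pderiv_inr (s : Fin n × Fin n) : (Amat n).map (pderiv (Sum.inr s)) = 0 := by
  have hX : (Xmat n).map (pderiv (Sum.inr s)) = 0 := by
    ext a b : 2
    simp [Xmat, pderiv_X]
  rw [Amat_eq_tracelessPart, tracelessPart_map_derivation, hX, tracelessPart_zero]

theorem Bmat_map_pderiv_inl (s : Fin n × Fin n) : (Bmat n).map (pderiv (Sum.inl s)) = 0 := by
  have hY : (Ymat n).map (pderiv (Sum.inl s)) = 0 := by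
    ext a b : 2
    simp [Ymat, pderiv_X]
  rw [Bmat_eq_tracelessPart, tracelessPart_map_derivation, hY, tracelessPart_zero]

/-- The vector field `(0, (A ^ k)°)`, where `°` denotes the traceless part. Up to the factor
`-(k + 1)` it is the Hamiltonian vector field of `tr A ^ (k + 1)`. -/
noncomputable def flowA (n k : ℕ) : Derivation ℂ (PolyFun n) (PolyFun n) :=
  matrixDeriv 0 (tracelessPart ℂ (Amat n ^ k))

/-- The vector field `(B, 0)`, which up to the factor `2` is the Hamiltonian vector field of
`tr B ^ 2`. -/
noncomputable def flowB (n : ℕ) : Derivation ℂ (PolyFun n) (PolyFun n) :=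
  matrixDeriv (Bmat n) 0

theorem pbracket_trAB_succ_zero (F : PolyFun n) (k : ℕ) :
    pbracket F (trAB n (k + 1) 0) = -((k + 1) • flowA n k F) := by
  have hX (i j : Fin n) : pderiv (Sum.inl (i, j)) (trAB n (k + 1) 0) =
      (k + 1) • tracelessPart ℂ (Amat n ^ k) j i := by
    rw [trAB_zero_right, Amat_eq_tracelessPart]
    exact derivation_trace_tracelessPart_pow_succ _ (Xmat_map_pderiv_inl i j) k
  have hY (s : Fin n × Fin n) : pderiv (Sum.inr s) (trAB n (k + 1) 0) = 0 := by
    rw [trAB_zero_right, derivation_trace_pow_eq_zero _ (Amat_map_pderiv_inr s)]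
  simp only [pbracket, hX, hY, flowA, matrixDeriv_apply, Matrix.zero_apply, mul_zero, zero_add,
    zero_sub, mul_smul_comm, Finset.smul_sum, Finset.sum_neg_distrib]

theorem pbracket_trAB_zero_two (F : PolyFun n) : pbracket F (trAB n 0 2) = 2 • flowB n F := by
  have hY (i j : Fin n) : pderiv (Sum.inr (i, j)) (trAB n 0 2) = 2 • Bmat n j i := by
    have h := derivation_trace_tracelessPart_pow_succ _ (Ymat_map_pderiv_inr i j) 1
    rwa [← Bmat_eq_tracelessPart, pow_one, tracelessPart_of_trace_eq_zero trace_Bmat,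
      ← trAB_zero_left] at h
  have hX (s : Fin n × Fin n) : pderiv (Sum.inl s) (trAB n 0 2) = 0 := by
    rw [trAB_zero_left, derivation_trace_pow_eq_zero _ (Bmat_map_pderiv_inl s)]
  simp only [pbracket, hX, hY, flowB, matrixDeriv_apply, Matrix.zero_apply, mul_zero, add_zero,
    sub_zero, mul_smul_comm, Finset.smul_sum]

theorem Amat_map_flowA (k : ℕ) : (Amat n).map (flowA n k) = 0 := by
  rw [flowA, Amat_map_matrixDeriv, tracelessPart_zero]

theorem Bmat_map_flowA (k : ℕ) : (Bmat n).map (flowA n k) = tracelessPart ℂ (Amat n ^ k) := by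
  rw [flowA, Bmat_map_matrixDeriv, tracelessPart_of_trace_eq_zero (trace_tracelessPart _)]

theorem Amat_map_flowB : (Amat n).map (flowB n) = Bmat n := by
  rw [flowB, Amat_map_matrixDeriv, tracelessPart_of_trace_eq_zero trace_Bmat]

theorem Bmat_map_flowB : (Bmat n).map (flowB n) = 0 := by
  rw [flowB, Bmat_map_matrixDeriv, tracelessPart_zero]

theorem flowB_trAB_succ (p q : ℕ) : flowB n (trAB n (p + 1) q) =
    ∑ ij ∈ antidiagonal p, trace (Amat n ^ ij.1 * Bmat n * Amat n ^ ij.2 * Bmat n ^ q) := by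
  rw [trAB, derivation_trace_pow_succ_mul _ Bmat_map_flowB, Amat_map_flowB]

theorem flowB_trAB_succ_zero (p : ℕ) : flowB n (trAB n (p + 1) 0) = (p + 1) • trAB n p 1 := by
  rw [trAB_zero_right, derivation_trace_pow_succ, Amat_map_flowB, trAB, pow_one]

theorem flowA_trAB_succ (k p q : ℕ) : flowA n k (trAB n p (q + 1)) =
    ∑ ij ∈ antidiagonal q,
      trace (Amat n ^ p * (Bmat n ^ ij.1 * tracelessPart ℂ (Amat n ^ k) * Bmat n ^ ij.2)) := by
  rw [trAB, derivation_trace_mul_pow_succ _ (Amat_map_flowA k), Bmat_map_flowA]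

theorem flowA_trAB_zero_right (k p : ℕ) : flowA n k (trAB n p 0) = 0 := by
  rw [trAB_zero_right, derivation_trace_pow_eq_zero _ (Amat_map_flowA k)]

theorem flowA_trAB_zero_succ (k q : ℕ) : flowA n k (trAB n 0 (q + 1)) =
    (q + 1) • (trAB n k q - (n : ℂ)⁻¹ • (trAB n k 0 * trAB n 0 q)) := by
  rw [trAB_zero_left, derivation_trace_pow_succ, Bmat_map_flowA, trace_mul_tracelessPart,
    trace_mul_comm, Fintype.card_fin, trAB_zero_right, trAB_zero_left, trAB]

theorem flowA_trAB_one (k p : ℕ) : flowA n k (trAB n p 1) =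
    trAB n (p + k) 0 - (n : ℂ)⁻¹ • (trAB n k 0 * trAB n p 0) := by
  rw [← zero_add 1, flowA_trAB_succ, Finset.Nat.antidiagonal_zero, Finset.sum_singleton, pow_zero,
    one_mul, mul_one, trace_mul_tracelessPart, ← pow_add, Fintype.card_fin]
  simp only [trAB_zero_right]

theorem flowA_one_trAB_one (p : ℕ) : flowA n 1 (trAB n p 1) = trAB n (p + 1) 0 := by
  rw [flowA_trAB_one, trAB_one_zero, zero_mul, smul_zero, sub_zero]

theorem flowA_prod_trAB_zero_right {κ : Type*} (k : ℕ) (s : Finset κ) (i : κ → ℕ) :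
    flowA n k (∏ j ∈ s, trAB n (i j) 0) = 0 := by
  classical
  induction s using Finset.induction_on with
  | empty => simp
  | insert j s hj ih =>
    rw [Finset.prod_insert hj, Derivation.leibniz, ih, flowA_trAB_zero_right, smul_zero, smul_zero,
      add_zero]

end Flows

section LieAlgebra

variable {n : ℕ}

/-- The Lie algebra `Lie(ℱ)`, as a linear subspace. -/
def lieSubspace (n : ℕ) : Submodule ℂ (PolyFun n) where
  carrier := {f | LieGen n (calF n) f}
  add_mem' := LieGen.add
  zero_mem' := LieGen.zero
  smul_mem' := LieGen.smul

theorem calF_subset_lieSubspace : calF n ⊆ lieSubspace n :=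
  fun _ => LieGen.base

theorem pbracket_mem_lieSubspace {f g : PolyFun n} (hf : f ∈ lieSubspace n)
    (hg : g ∈ lieSubspace n) : pbracket f g ∈ lieSubspace n :=
  LieGen.bracket hf hg

theorem trAB_two_zero_mem_lieSubspace : trAB n 2 0 ∈ lieSubspace n :=
  calF_subset_lieSubspace (by simp [calF])

theorem flowB_mem_lieSubspace {f : PolyFun n} (hf : f ∈ lieSubspace n) :
    flowB n f ∈ lieSubspace n := by
  have h := pbracket_mem_lieSubspace hf (calF_subset_lieSubspace (a := trAB n 0 2) (by simp [calF]))
  rw [pbracket_trAB_zero_two] at h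
  exact (nsmul_mem_submodule_iff two_ne_zero).1 h

theorem flowA_mem_lieSubspace {k : ℕ} (hk : trAB n (k + 1) 0 ∈ lieSubspace n) {f : PolyFun n}
    (hf : f ∈ lieSubspace n) : flowA n k f ∈ lieSubspace n := by
  have h := pbracket_mem_lieSubspace hf hk
  rw [pbracket_trAB_succ_zero] at h
  exact (nsmul_mem_submodule_iff k.succ_ne_zero).1 (neg_mem_iff.1 h)

theorem trAB_one_mem_lieSubspace {k : ℕ} (hk : trAB n (k + 1) 0 ∈ lieSubspace n) :
    trAB n k 1 ∈ lieSubspace n := by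
  have h := flowB_mem_lieSubspace hk
  rw [flowB_trAB_succ_zero] at h
  exact (nsmul_mem_submodule_iff k.succ_ne_zero).1 h

theorem trAB_two_zero_sq_mem_lieSubspace : trAB n 2 0 ^ 2 ∈ lieSubspace n := by
  have h : flowA n 1 (flowA n 1 (trAB n 1 1 ^ 2)) ∈ lieSubspace n :=
    flowA_mem_lieSubspace trAB_two_zero_mem_lieSubspace
      (flowA_mem_lieSubspace trAB_two_zero_mem_lieSubspace
        (calF_subset_lieSubspace (by simp [calF])))
  have hflow : flowA n 1 (flowA n 1 (trAB n 1 1 ^ 2)) = 2 • trAB n 2 0 ^ 2 := by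
    simp only [pow_two, Derivation.leibniz, smul_eq_mul, map_add, flowA_one_trAB_one,
      flowA_trAB_zero_right]
    ring
  rw [hflow] at h
  exact (nsmul_mem_submodule_iff two_ne_zero).1 h

theorem pbracket_sq (f g : PolyFun n) : pbracket f (g ^ 2) = 2 • (g * pbracket f g) := by
  simp only [pbracket, pow_two, Derivation.leibniz, smul_eq_mul, Finset.mul_sum, Finset.smul_sum]
  refine Finset.sum_congr rfl fun _ _ => Finset.sum_congr rfl fun _ _ => ?_
  ring

theorem trAB_two_zero_mul_flowA_one_mem_lieSubspace {f : PolyFun n} (hf : f ∈ lieSubspace n) :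
    trAB n 2 0 * flowA n 1 f ∈ lieSubspace n := by
  have h := pbracket_mem_lieSubspace hf trAB_two_zero_sq_mem_lieSubspace
  rw [pbracket_sq, pbracket_trAB_succ_zero, mul_neg, mul_smul_comm, smul_neg, neg_mem_iff,
    nsmul_mem_submodule_iff two_ne_zero, nsmul_mem_submodule_iff two_ne_zero] at h
  exact h

/-- In the induction step, bracketing `tr A ^ (l + 2) B` with `tr A ^ 3` produces `tr A ^ (l + 4)`
up to the error `n⁻¹ * tr A ^ 2 * tr A ^ (l + 2)`. -/
theorem trAB_zero_right_mem_lieSubspace {k : ℕ} (hk : 2 ≤ k) : trAB n k 0 ∈ lieSubspace n := by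
  have h3 : trAB n 3 0 ∈ lieSubspace n := calF_subset_lieSubspace (by simp [calF])
  induction k using Nat.strong_induction_on with
  | _ k ih =>
  obtain rfl | rfl | ⟨l, rfl⟩ : k = 2 ∨ k = 3 ∨ ∃ l, k = l + 4 := by
    rcases Nat.lt_or_ge k 4 with h | h
    · omega
    · exact .inr (.inr ⟨k - 4, by omega⟩)
  · exact trAB_two_zero_mem_lieSubspace
  · exact h3
  have hmain : flowA n 2 (trAB n (l + 2) 1) ∈ lieSubspace n :=
    flowA_mem_lieSubspace h3 (trAB_one_mem_lieSubspace (ih _ (by omega) (by omega)))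
  have herror : trAB n 2 0 * flowA n 1 (trAB n (l + 1) 1) ∈ lieSubspace n :=
    trAB_two_zero_mul_flowA_one_mem_lieSubspace
      (trAB_one_mem_lieSubspace (ih _ (by omega) (by omega)))
  rw [flowA_trAB_one] at hmain
  rw [flowA_one_trAB_one] at herror
  exact (Submodule.sub_mem_iff_left _ (Submodule.smul_mem _ _ herror)).1 hmain

end LieAlgebra

section Restriction

variable {n : ℕ}

/-- Evaluation of polynomial functions at `(X, Y)`, as an algebra homomorphism. -/
noncomputable def evalHom (X Y : Matrix (Fin n) (Fin n) ℂ) : PolyFun n →ₐ[ℂ] ℂ :=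
  aeval (Sum.elim (fun p => X p.1 p.2) (fun p => Y p.1 p.2))

/-- Restriction of polynomial functions to `Ŝ_n`. -/
noncomputable def restrictShat (n : ℕ) : PolyFun n →ₐ[ℂ] (Shat n → ℂ) :=
  AlgHom.pi fun P : Shat n => evalHom P.1.1 P.1.2

theorem Amat_map_evalHom {X : Matrix (Fin n) (Fin n) ℂ} (hX : trace X = 0)
    (Y : Matrix (Fin n) (Fin n) ℂ) : (Amat n).map (evalHom X Y) = X := by
  have hmap : (Xmat n).map (evalHom X Y).toLinearMap = X := by
    ext i j : 2
    simp [Xmat, evalHom]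
  rw [Amat_eq_tracelessPart, ← AlgHom.coe_toLinearMap, tracelessPart_map, hmap,
    tracelessPart_of_trace_eq_zero hX]

theorem Bmat_map_evalHom (X : Matrix (Fin n) (Fin n) ℂ) {Y : Matrix (Fin n) (Fin n) ℂ}
    (hY : trace Y = 0) : (Bmat n).map (evalHom X Y) = Y := by
  have hmap : (Ymat n).map (evalHom X Y).toLinearMap = Y := by
    ext i j : 2
    simp [Ymat, evalHom]
  rw [Bmat_eq_tracelessPart, ← AlgHom.coe_toLinearMap, tracelessPart_map, hmap,
    tracelessPart_of_trace_eq_zero hY]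

theorem add_left_mem_Shat {X Y U : Matrix (Fin n) (Fin n) ℂ} (h : (X, Y) ∈ Shat n)
    (hU : trace U = 0) (hYU : Commute Y U) : (X + U, Y) ∈ Shat n := by
  obtain ⟨hX, hY, hrank⟩ := h
  refine ⟨by rw [trace_add, hX, hU, add_zero], hY, ?_⟩
  rwa [add_mul, mul_add, hYU.eq, add_sub_add_right_eq_sub]

theorem add_right_mem_Shat {X Y V : Matrix (Fin n) (Fin n) ℂ} (h : (X, Y) ∈ Shat n)
    (hV : trace V = 0) (hXV : Commute X V) : (X, Y + V) ∈ Shat n := by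
  obtain ⟨hX, hY, hrank⟩ := h
  refine ⟨hX, by rw [trace_add, hY, hV, add_zero], ?_⟩
  rwa [add_mul, mul_add, hXV.eq, add_sub_add_right_eq_sub]

theorem restrictShat_matrixDeriv_eq_zero {U V : Matrix (Fin n) (Fin n) (PolyFun n)}
    (hline : ∀ P ∈ Shat n, ∀ t : ℂ,
      (P.1 + t • U.map (evalHom P.1 P.2), P.2 + t • V.map (evalHom P.1 P.2)) ∈ Shat n)
    {f : PolyFun n} (hf : restrictShat n f = 0) : restrictShat n (matrixDeriv U V f) = 0 := by
  let point (P : Matrix (Fin n) (Fin n) ℂ × Matrix (Fin n) (Fin n) ℂ) :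
      (Fin n × Fin n) ⊕ (Fin n × Fin n) → ℂ :=
    Sum.elim (fun p => P.1 p.1 p.2) (fun p => P.2 p.1 p.2)
  funext P
  refine eval_mkDerivation_eq_zero (S := point '' Shat n) ?_ ?_ (Set.mem_image_of_mem point P.2)
  · rintro _ ⟨Q, hQ, rfl⟩ t
    refine ⟨_, hline Q hQ t, ?_⟩
    funext s
    rcases s with s | s <;> rfl
  · rintro _ ⟨Q, hQ, rfl⟩
    exact congrFun hf ⟨Q, hQ⟩

theorem restrictShat_flowA_eq_zero (k : ℕ) {f : PolyFun n} (hf : restrictShat n f = 0) :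
    restrictShat n (flowA n k f) = 0 := by
  refine restrictShat_matrixDeriv_eq_zero (fun ⟨X, Y⟩ h t => ?_) hf
  have hzero : (0 : Matrix (Fin n) (Fin n) (PolyFun n)).map (evalHom X Y) = 0 :=
    map_zero (evalHom X Y).mapMatrix
  have hpow : (tracelessPart ℂ (Amat n ^ k)).map (evalHom X Y) = tracelessPart ℂ (X ^ k) := by
    have hmap : (Amat n ^ k).map (evalHom X Y) = X ^ k :=
      (map_pow (evalHom X Y).mapMatrix (Amat n) k).trans
        (congrArg (· ^ k) (Amat_map_evalHom h.1 Y))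
    rw [← hmap, ← AlgHom.coe_toLinearMap, tracelessPart_map]
  rw [hzero, smul_zero, add_zero, hpow]
  exact add_right_mem_Shat h (by rw [trace_smul, trace_tracelessPart, smul_zero])
    ((commute_tracelessPart_pow X k).smul_right t)

theorem restrictShat_flowB_eq_zero {f : PolyFun n} (hf : restrictShat n f = 0) :
    restrictShat n (flowB n f) = 0 := by
  refine restrictShat_matrixDeriv_eq_zero (fun ⟨X, Y⟩ h t => ?_) hf
  have hzero : (0 : Matrix (Fin n) (Fin n) (PolyFun n)).map (evalHom X Y) = 0 :=
    map_zero (evalHom X Y).mapMatrix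
  rw [hzero, smul_zero, add_zero, Bmat_map_evalHom X h.2.1]
  exact add_left_mem_Shat h (by rw [trace_smul, h.2.1, smul_zero])
    ((Commute.refl Y).smul_right t)

/-- The matrix of restrictions to `Ŝ_n` of the entries of `A`. -/
noncomputable def AmatShat (n : ℕ) : Matrix (Fin n) (Fin n) (Shat n → ℂ) :=
  (Amat n).map (restrictShat n)

/-- The matrix of restrictions to `Ŝ_n` of the entries of `B`. -/
noncomputable def BmatShat (n : ℕ) : Matrix (Fin n) (Fin n) (Shat n → ℂ) :=
  (Bmat n).map (restrictShat n)

theorem hasRankOneTraces_lie_AmatShat_BmatShat :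
    HasRankOneTraces (⁅AmatShat n, BmatShat n⁆ -
      Complex.I • (1 : Matrix (Fin n) (Fin n) (Shat n → ℂ))) := by
  refine hasRankOneTraces_of_forall_eval fun P => ?_
  let ε : (Shat n → ℂ) →ₐ[ℂ] ℂ := Pi.evalAlgHom ℂ _ P
  have hA : ε.mapMatrix (AmatShat n) = P.1.1 := Amat_map_evalHom P.2.1 _
  have hB : ε.mapMatrix (BmatShat n) = P.1.2 := Bmat_map_evalHom _ P.2.2.1
  have heval : ε.mapMatrix (⁅AmatShat n, BmatShat n⁆ -
      Complex.I • (1 : Matrix (Fin n) (Fin n) (Shat n → ℂ))) =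
        P.1.1 * P.1.2 - P.1.2 * P.1.1 - Complex.I • 1 := by
    rw [Ring.lie_def, map_sub, map_sub, map_mul, map_mul, map_smul, map_one, hA, hB]
  exact (congrArg HasRankOneTraces heval).mpr (hasRankOneTraces_of_rank_eq_one P.2.2.2)

/-- The polynomial functions whose restriction to `Ŝ_n` is a combination of products of the
`tr A ^ p B ^ q` of total degree at most `e`. -/
noncomputable def traceSpanShat (n : ℕ) (e : ℤ) : Submodule ℂ (PolyFun n) :=
  (traceSpan ℂ (AmatShat n) (BmatShat n) e).comap (restrictShat n).toLinearMap

theorem traceSpanShat_mono {e e' : ℤ} (h : e ≤ e') : traceSpanShat n e ≤ traceSpanShat n e' :=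
  Submodule.comap_mono (traceSpan_mono h)

theorem mul_mem_traceSpanShat {e e' : ℤ} {f g : PolyFun n} (hf : f ∈ traceSpanShat n e)
    (hg : g ∈ traceSpanShat n e') : f * g ∈ traceSpanShat n (e + e') := by
  have h := mul_mem_traceSpan hf hg
  rwa [AlgHom.toLinearMap_apply, AlgHom.toLinearMap_apply, ← map_mul] at h

theorem restrictShat_trace_matrixWord (w : List Bool) :
    restrictShat n (trace (matrixWord (Amat n) (Bmat n) w)) =
      trace (matrixWord (AmatShat n) (BmatShat n) w) :=
  map_trace_matrixWord (restrictShat n : PolyFun n →+* (Shat n → ℂ)) w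

theorem restrictShat_trAB (p q : ℕ) :
    restrictShat n (trAB n p q) = trace (AmatShat n ^ p * BmatShat n ^ q) := by
  rw [trAB, ← matrixWord_sortedWord, restrictShat_trace_matrixWord, matrixWord_sortedWord]

theorem trAB_mem_traceSpanShat (p q : ℕ) : trAB n p q ∈ traceSpanShat n (p + q) := by
  rw [traceSpanShat, Submodule.mem_comap, AlgHom.toLinearMap_apply, restrictShat_trAB]
  exact trace_pow_mul_pow_mem_traceSpan p q

theorem prod_trAB_zero_right_mem_traceSpanShat {κ : Type*} (s : Finset κ) (i : κ → ℕ) :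
    ∏ k ∈ s, trAB n (i k) 0 ∈ traceSpanShat n (∑ k ∈ s, i k : ℕ) := by
  classical
  induction s using Finset.induction_on with
  | empty => simpa [traceSpanShat] using one_mem_traceSpan
  | insert k s hk ih =>
    rw [Finset.prod_insert hk, Finset.sum_insert hk, Nat.cast_add]
    exact mul_mem_traceSpanShat (by simpa using trAB_mem_traceSpanShat (i k) 0) ih

theorem trace_matrixWord_sub_trAB_mem_traceSpanShat {w : List Bool} {p q : ℕ}
    (h : w.Perm (sortedWord p q)) :
    trace (matrixWord (Amat n) (Bmat n) w) - trAB n p q ∈ traceSpanShat n (p + q - 4) := by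
  have hmem := trace_matrixWord_sub_mem (hasRankOneTraces_lie_AmatShat_BmatShat (n := n)) h
  rwa [← restrictShat_trace_matrixWord, ← restrictShat_trace_matrixWord, ← map_sub,
    matrixWord_sortedWord, h.length_eq, length_sortedWord, Nat.cast_add] at hmem

theorem flowB_trAB_sub_mem_traceSpanShat (p q : ℕ) :
    flowB n (trAB n (p + 1) q) - (p + 1) • trAB n p (q + 1) ∈ traceSpanShat n (p + q - 3) := by
  rw [flowB_trAB_succ, ← Finset.Nat.card_antidiagonal p, ← Finset.sum_const,
    ← Finset.sum_sub_distrib]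
  refine Submodule.sum_mem _ fun ij hij => ?_
  rw [mem_antidiagonal] at hij
  have hperm : (List.replicate ij.1 true ++ false :: sortedWord ij.2 q).Perm
      (sortedWord p (q + 1)) :=
    perm_sortedWord_iff.2 (by simp [sortedWord, List.count_replicate, hij])
  have h := trace_matrixWord_sub_trAB_mem_traceSpanShat (n := n) hperm
  rw [matrixWord_append, matrixWord_cons, matrixWord_replicate, matrixWord_sortedWord, cond_true,
    cond_false, ← mul_assoc, ← mul_assoc] at h
  exact traceSpanShat_mono (by push_cast; omega) h

theorem flowA_one_trAB_sub_mem_traceSpanShat (p q : ℕ) :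
    flowA n 1 (trAB n p (q + 1)) - (q + 1) • trAB n (p + 1) q ∈ traceSpanShat n (p + q - 3) := by
  rw [flowA_trAB_succ, ← Finset.Nat.card_antidiagonal q, ← Finset.sum_const,
    ← Finset.sum_sub_distrib]
  refine Submodule.sum_mem _ fun ij hij => ?_
  rw [mem_antidiagonal] at hij
  have hperm : (sortedWord p ij.1 ++ true :: List.replicate ij.2 false).Perm
      (sortedWord (p + 1) q) :=
    perm_sortedWord_iff.2 (by simp [sortedWord, List.count_replicate, hij])
  have h := trace_matrixWord_sub_trAB_mem_traceSpanShat (n := n) hperm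
  rw [matrixWord_append, matrixWord_cons, matrixWord_replicate, matrixWord_sortedWord, cond_true,
    cond_false] at h
  rw [pow_one, tracelessPart_of_trace_eq_zero trace_Amat, mul_assoc (_ ^ ij.1), ← mul_assoc]
  exact traceSpanShat_mono (by push_cast; omega) h

end Restriction

section LieModShat

variable {n : ℕ}

/-- The polynomial functions that agree on `Ŝ_n` with an element of `Lie(ℱ)`. -/
noncomputable def lieModShat (n : ℕ) : Submodule ℂ (PolyFun n) :=
  ((lieSubspace n).map (restrictShat n).toLinearMap).comap (restrictShat n).toLinearMap

theorem mem_lieModShat {f : PolyFun n} : f ∈ lieModShat n ↔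
    ∃ g, LieGen n (calF n) g ∧ ∀ P ∈ Shat n, evalP P.1 P.2 f = evalP P.1 P.2 g :=
  ⟨fun ⟨g, hg, hgf⟩ => ⟨g, hg, fun P hP => (congrFun hgf ⟨P, hP⟩).symm⟩,
    fun ⟨g, hg, hfg⟩ => ⟨g, hg, funext fun P => (hfg P.1 P.2).symm⟩⟩

theorem lieSubspace_le_lieModShat : lieSubspace n ≤ lieModShat n :=
  Submodule.le_comap_map _ _

theorem derivation_mem_lieModShat {d : Derivation ℂ (PolyFun n) (PolyFun n)}
    (hlie : ∀ f ∈ lieSubspace n, d f ∈ lieSubspace n)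
    (hzero : ∀ f, restrictShat n f = 0 → restrictShat n (d f) = 0) {f : PolyFun n}
    (hf : f ∈ lieModShat n) : d f ∈ lieModShat n := by
  obtain ⟨g, hg, hgf⟩ := hf
  rw [AlgHom.toLinearMap_apply, AlgHom.toLinearMap_apply, ← sub_eq_zero, ← map_sub] at hgf
  refine ⟨d g, hlie g hg, sub_eq_zero.1 ?_⟩
  rw [AlgHom.toLinearMap_apply, AlgHom.toLinearMap_apply, ← map_sub, ← map_sub]
  exact hzero _ hgf

theorem flowB_mem_lieModShat {f : PolyFun n} (hf : f ∈ lieModShat n) : flowB n f ∈ lieModShat n :=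
  derivation_mem_lieModShat (fun _ => flowB_mem_lieSubspace) (fun _ => restrictShat_flowB_eq_zero)
    hf

theorem flowA_mem_lieModShat {k : ℕ} (hk : 1 ≤ k) {f : PolyFun n} (hf : f ∈ lieModShat n) :
    flowA n k f ∈ lieModShat n :=
  derivation_mem_lieModShat
    (fun _ => flowA_mem_lieSubspace (trAB_zero_right_mem_lieSubspace (by omega)))
    (fun _ => restrictShat_flowA_eq_zero k) hf

/-- Products over lists are turned into the nonempty products over ranges of the induction
hypothesis by adding a factor `tr 1 = n`. -/
theorem traceSpanShat_le_lieModShat (hn : n ≠ 0) {D : ℕ}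
    (H : ∀ m : ℕ, 1 ≤ m → ∀ p q : ℕ → ℕ, (∑ k ∈ Finset.range m, (p k + q k)) ≤ D →
      ∏ k ∈ Finset.range m, trAB n (p k) (q k) ∈ lieModShat n) :
    traceSpanShat n D ≤ lieModShat n := by
  refine Submodule.comap_mono (Submodule.span_le.2 ?_)
  rintro _ ⟨l, hl, rfl⟩
  let l' := (0, 0) :: l
  have hsum : ∑ k ∈ Finset.range (l.length + 1), ((l'.getD k 0).1 + (l'.getD k 0).2) =
      (l.map fun x => x.1 + x.2).sum := by
    rw [Finset.sum_range_succ', Finset.sum_range, ← Fin.sum_univ_fun_getElem l]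
    simp [l']
  have hprod : ∏ k ∈ Finset.range (l.length + 1), trAB n (l'.getD k 0).1 (l'.getD k 0).2 =
      n • (l.map fun x => trAB n x.1 x.2).prod := by
    rw [Finset.prod_range_succ', Finset.prod_range, ← Fin.prod_univ_fun_getElem l]
    simp [l', trAB_zero_zero, mul_comm]
  have hmem := H (l.length + 1) (by omega) _ _ (by rw [hsum]; exact_mod_cast hl)
  rw [hprod, nsmul_mem_submodule_iff hn] at hmem
  have hrestrict : restrictShat n ∘ (fun x : ℕ × ℕ => trAB n x.1 x.2) =
      fun x => trace (AmatShat n ^ x.1 * BmatShat n ^ x.2) :=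
    funext fun x => restrictShat_trAB x.1 x.2
  rwa [lieModShat, Submodule.mem_comap, AlgHom.toLinearMap_apply, map_list_prod, List.map_map,
    hrestrict] at hmem

theorem trAB_mem_lieModShat {D : ℕ} (hD : traceSpanShat n D ≤ lieModShat n) {p q : ℕ}
    (hpq : p + q ≤ D + 4) : trAB n p q ∈ lieModShat n := by
  induction q generalizing p with
  | zero =>
    obtain rfl | rfl | hp : p = 0 ∨ p = 1 ∨ 2 ≤ p := by omega
    · exact hD (traceSpanShat_mono (by simp) (trAB_mem_traceSpanShat 0 0))
    · exact trAB_one_zero (n := n) ▸ zero_mem _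
    · exact lieSubspace_le_lieModShat (trAB_zero_right_mem_lieSubspace hp)
  | succ q ih =>
    have hflow := flowB_mem_lieModShat (ih (p := p + 1) (by omega))
    have hsub := hD (traceSpanShat_mono (by omega) (flowB_trAB_sub_mem_traceSpanShat p q))
    exact (nsmul_mem_submodule_iff p.succ_ne_zero).1 ((Submodule.sub_mem_iff_right _ hflow).1 hsub)

theorem trAB_succ_mul_mem_lieModShat {D : ℕ} (hD : traceSpanShat n D ≤ lieModShat n) {p q e : ℕ}
    {g : PolyFun n} (hg : flowA n 1 g = 0) (hge : g ∈ traceSpanShat n e)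
    (hdeg : p + q + e ≤ D + 3) (h : trAB n p (q + 1) * g ∈ lieModShat n) :
    trAB n (p + 1) q * g ∈ lieModShat n := by
  have hflow := flowA_mem_lieModShat le_rfl h
  rw [Derivation.leibniz, hg, smul_zero, zero_add, smul_eq_mul, mul_comm] at hflow
  have hsub := hD (traceSpanShat_mono (by omega)
    (mul_mem_traceSpanShat (flowA_one_trAB_sub_mem_traceSpanShat p q) hge))
  rw [sub_mul, smul_mul_assoc] at hsub
  exact (nsmul_mem_submodule_iff q.succ_ne_zero).1 ((Submodule.sub_mem_iff_right _ hflow).1 hsub)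

theorem trAB_zero_left_mul_mul_mem_lieModShat (hn : n ≠ 0) {k q : ℕ} (hk : 1 ≤ k)
    {g : PolyFun n} (hg : flowA n k g = 0) (hkq : trAB n k q * g ∈ lieModShat n)
    (hq : trAB n 0 (q + 1) * g ∈ lieModShat n) :
    trAB n 0 q * (trAB n k 0 * g) ∈ lieModShat n := by
  have hflow := flowA_mem_lieModShat hk hq
  rw [Derivation.leibniz, hg, smul_zero, zero_add, smul_eq_mul, mul_comm, flowA_trAB_zero_succ,
    smul_mul_assoc, nsmul_mem_submodule_iff q.succ_ne_zero, sub_mul,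
    Submodule.sub_mem_iff_right _ hkq, smul_mul_assoc,
    Submodule.smul_mem_iff _ (inv_ne_zero (Nat.cast_ne_zero.2 hn))] at hflow
  rwa [mul_left_comm, ← mul_assoc]

theorem trAB_mul_prod_mem_lieModShat (hn : n ≠ 0) {D : ℕ}
    (hD : traceSpanShat n D ≤ lieModShat n) {κ : Type*} (s : Finset κ) {i : κ → ℕ}
    (hi : ∀ k ∈ s, 1 ≤ i k) {p q : ℕ} (hdeg : p + q + ∑ k ∈ s, i k ≤ D + 4) :
    trAB n p q * ∏ k ∈ s, trAB n (i k) 0 ∈ lieModShat n := by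
  classical
  induction s using Finset.induction_on generalizing p q with
  | empty => simpa using trAB_mem_lieModShat hD (by simpa using hdeg)
  | insert k s hk ih =>
    rw [Finset.forall_mem_insert] at hi
    induction p generalizing q with
    | zero =>
      rw [Finset.sum_insert hk] at hdeg
      rw [Finset.prod_insert hk]
      exact trAB_zero_left_mul_mul_mem_lieModShat hn hi.1 (flowA_prod_trAB_zero_right _ s i)
        (ih hi.2 (by omega)) (ih hi.2 (by omega))
    | succ p ihp =>
      exact trAB_succ_mul_mem_lieModShat hD (flowA_prod_trAB_zero_right _ _ i)
        (prod_trAB_zero_right_mem_traceSpanShat _ i) (by omega) (ihp (by omega))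

end LieModShat

/-- STATEMENT 9 (Lemma on `tr A^p B^q · ∏ tr A^{i_k}`), assuming the induction
hypothesis `H(D)`. -/
theorem stmt_9 (n : ℕ) (hn : 1 ≤ n) (D : ℕ)
    (H : ∀ m : ℕ, 1 ≤ m → ∀ p q : ℕ → ℕ,
      (∑ k ∈ Finset.range m, (p k + q k)) ≤ D →
      ∃ g : PolyFun n, LieGen n (calF n) g ∧
        ∀ P ∈ Shat n,
          evalP P.1 P.2 (∏ k ∈ Finset.range m, trAB n (p k) (q k)) = evalP P.1 P.2 g)
    (p q m : ℕ) (i : ℕ → ℕ) (hi : ∀ k < m, 2 ≤ i k)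
    (hdeg : p + q + (∑ k ∈ Finset.range m, i k) ≤ D + 4) :
    ∃ g : PolyFun n, LieGen n (calF n) g ∧
      ∀ P ∈ Shat n,
        evalP P.1 P.2 (trAB n p q * ∏ k ∈ Finset.range m, trAB n (i k) 0)
          = evalP P.1 P.2 g := by
  have hn0 : n ≠ 0 := by omega
  exact mem_lieModShat.1 <| trAB_mul_prod_mem_lieModShat hn0
    (traceSpanShat_le_lieModShat hn0 fun m hm p q h => mem_lieModShat.2 (H m hm p q h))
    (Finset.range m) (fun k hk => one_le_two.trans (hi k (Finset.mem_range.1 hk))) hdeg
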